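/- arXiv:2603.03200 — 8 statements merged into one kernel-verified Lean document; each statement's English description precedes it below -/
import Mathlib

section
/- Let A be a countable set and X ⊆ A^ℕ a one-sided shift space. Then (X, σ, d_prod) has the shadowing property if and only if X is a shift of finite order, i.e. there exists p ≥ 1 such that membership in X is determined by allowed blocks of length p. -/
/-- The left shift on `A^ℕ`. -/
def shiftSeq {A : Type*} (x : ℕ → A) : ℕ → A := fun n => x (n + 1)

open Classical in
/-- The standard product ultrametric `d_prod(x,y) = 2^{-N(x,y)}` on `A^ℕ`. -/
noncomputable def dProd {A : Type*} (x y : ℕ → A) : ℝ :=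
  if x = y then 0 else (1 / 2 : ℝ) ^ sInf {n : ℕ | x n ≠ y n}

/-- A `δ`-pseudo-orbit lying in `X` for the map `σ`, with respect to `d`. -/
def IsPseudoOrbitOn {Y : Type*} (d : Y → Y → ℝ) (σ : Y → Y) (X : Set Y)
    (δ : ℝ) (xs : ℕ → Y) : Prop :=
  ∀ n : ℕ, xs n ∈ X ∧ d (σ (xs n)) (xs (n + 1)) < δ

/-- The shadowing property for `σ` restricted to `X`, with respect to `d`. -/
def HasShadowingOn {Y : Type*} (d : Y → Y → ℝ) (σ : Y → Y) (X : Set Y) : Prop :=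
  ∀ ε > (0:ℝ), ∃ δ > (0:ℝ), ∀ xs : ℕ → Y, IsPseudoOrbitOn d σ X δ xs →
    ∃ x ∈ X, ∀ i : ℕ, d (σ^[i] x) (xs i) < ε

/-- `X` is a shift of finite order `p`: if every length-`p` block of `x` occurs
(at some position) in some element of `X`, then `x ∈ X`. -/
def IsShiftOfOrder {A : Type*} (X : Set (ℕ → A)) (p : ℕ) : Prop :=
  ∀ x : ℕ → A,
    (∀ i : ℕ, ∃ y ∈ X, ∃ j : ℕ, ∀ t < p, x (i + t) = y (j + t)) → x ∈ X

/-!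
By the description of the balls of `dProd`, the `2⁻ᵐ`-pseudo-orbits of the shift are exactly the
sequences of points of `X` whose initial blocks of length `m + 2` are the successive blocks of a
single sequence `x`. A point tracing such a pseudo-orbit with precision `1` must be `x` itself.
Hence shadowing asks that `x ∈ X` whenever all blocks of `x` of some fixed length start points
of `X`; as `X` is shift-invariant, these are the blocks occurring anywhere in points of `X`.
-/

section ProductMetric

variable {A : Type*}

theorem dProd_lt_half_pow_iff {x y : ℕ → A} {k : ℕ} :
    dProd x y < (1 / 2 : ℝ) ^ k ↔ ∀ n ≤ k, x n = y n := by
  unfold dProd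
  split_ifs with hxy
  · simp [hxy]
  · have differ : {n : ℕ | x n ≠ y n}.Nonempty := Function.ne_iff.mp hxy
    rw [pow_lt_pow_iff_right_of_lt_one₀ (by norm_num) (by norm_num)]
    constructor
    · intro hk n hn
      exact not_not.mp (Nat.notMem_of_lt_sInf (hn.trans_lt hk))
    · intro agree
      by_contra! hk
      exact Nat.sInf_mem differ (agree _ hk)

theorem hasShadowingOn_dProd_iff {f : (ℕ → A) → ℕ → A} {X : Set (ℕ → A)} :
    HasShadowingOn dProd f X ↔
      ∀ k : ℕ, ∃ m : ℕ, ∀ xs, IsPseudoOrbitOn dProd f X ((1 / 2) ^ m) xs →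
        ∃ x ∈ X, ∀ i, ∀ t ≤ k, f^[i] x t = xs i t := by
  constructor
  · intro shadowing k
    obtain ⟨δ, hδ, shadow⟩ := shadowing ((1 / 2) ^ k) (by positivity)
    obtain ⟨m, hm⟩ := exists_pow_lt_of_lt_one hδ one_half_lt_one
    refine ⟨m, fun xs hxs => ?_⟩
    obtain ⟨x, hx, close⟩ := shadow xs fun n => ⟨(hxs n).1, (hxs n).2.trans hm⟩
    exact ⟨x, hx, fun i => dProd_lt_half_pow_iff.mp (close i)⟩
  · intro shadowing ε hε
    obtain ⟨k, hk⟩ := exists_pow_lt_of_lt_one hε one_half_lt_one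
    obtain ⟨m, shadow⟩ := shadowing k
    refine ⟨(1 / 2) ^ m, by positivity, fun xs hxs => ?_⟩
    obtain ⟨x, hx, agree⟩ := shadow xs hxs
    exact ⟨x, hx, fun i => (dProd_lt_half_pow_iff.mpr (agree i)).trans hk⟩

end ProductMetric

section Shift

variable {A : Type*} {X : Set (ℕ → A)}

theorem iterate_shiftSeq_apply (x : ℕ → A) (i t : ℕ) : shiftSeq^[i] x t = x (i + t) := by
  induction i generalizing x with
  | zero => rw [Function.iterate_zero_apply, zero_add]
  | succ i ih => rw [Function.iterate_succ_apply, ih, shiftSeq, Nat.add_right_comm]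

theorem isPseudoOrbitOn_dProd_shiftSeq_iff {m : ℕ} {xs : ℕ → ℕ → A} :
    IsPseudoOrbitOn dProd shiftSeq X ((1 / 2) ^ m) xs ↔
      ∃ x : ℕ → A, ∀ i, xs i ∈ X ∧ ∀ t < m + 2, xs i t = x (i + t) := by
  simp only [IsPseudoOrbitOn, dProd_lt_half_pow_iff, shiftSeq]
  constructor
  · intro hxs
    have apply_eq_head : ∀ t < m + 2, ∀ i, xs i t = xs (i + t) 0 := by
      intro t
      induction t with
      | zero => exact fun _ _ => rfl
      | succ t ih =>
        intro ht i
        calc xs i (t + 1) = xs (i + 1) t := (hxs i).2 t (by omega)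
          _ = xs (i + 1 + t) 0 := ih (by omega) (i + 1)
          _ = xs (i + (t + 1)) 0 := by rw [add_right_comm, add_assoc]
    exact ⟨fun i => xs i 0, fun i => ⟨(hxs i).1, fun t ht => apply_eq_head t ht i⟩⟩
  · rintro ⟨x, hx⟩ i
    refine ⟨(hx i).1, fun t ht => ?_⟩
    rw [(hx i).2 (t + 1) (by omega), (hx (i + 1)).2 t (by omega), add_right_comm, add_assoc]

theorem isShiftOfOrder_of_initial_blocks (hinv : Set.MapsTo shiftSeq X X) {p : ℕ}
    (h : ∀ (x : ℕ → A) (xs : ℕ → ℕ → A),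
      (∀ i, xs i ∈ X ∧ ∀ t < p, xs i t = x (i + t)) → x ∈ X) :
    IsShiftOfOrder X p := by
  intro x blocks
  choose y hy j hj using blocks
  refine h x (fun i => shiftSeq^[j i] (y i)) fun i => ⟨hinv.iterate (j i) (hy i), fun t ht => ?_⟩
  rw [iterate_shiftSeq_apply, hj i t ht]

theorem HasShadowingOn.exists_isShiftOfOrder (hinv : Set.MapsTo shiftSeq X X)
    (hX : HasShadowingOn dProd shiftSeq X) : ∃ p : ℕ, 1 ≤ p ∧ IsShiftOfOrder X p := by
  obtain ⟨m, shadow⟩ := hasShadowingOn_dProd_iff.mp hX 0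
  refine ⟨m + 2, by omega, isShiftOfOrder_of_initial_blocks hinv fun x xs hxs => ?_⟩
  obtain ⟨z, hz, agree⟩ := shadow xs (isPseudoOrbitOn_dProd_shiftSeq_iff.mpr ⟨x, hxs⟩)
  have z_eq_x : z = x := by
    funext i
    calc z i = shiftSeq^[i] z 0 := (iterate_shiftSeq_apply z i 0).symm
      _ = xs i 0 := agree i 0 le_rfl
      _ = x i := (hxs i).2 0 (by omega)
  exact z_eq_x ▸ hz

theorem IsShiftOfOrder.hasShadowingOn {p : ℕ} (hX : IsShiftOfOrder X p) :
    HasShadowingOn dProd shiftSeq X := by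
  refine hasShadowingOn_dProd_iff.mpr fun k => ⟨k + p, fun xs hxs => ?_⟩
  obtain ⟨x, hx⟩ := isPseudoOrbitOn_dProd_shiftSeq_iff.mp hxs
  refine ⟨x, hX x fun i => ⟨xs i, (hx i).1, 0, fun t ht => ?_⟩, fun i t ht => ?_⟩
  · rw [zero_add, (hx i).2 t (by omega)]
  · rw [iterate_shiftSeq_apply, (hx i).2 t (by omega)]

end Shift

theorem shadowing_iff_finite_order_general {A : Type*} {X : Set (ℕ → A)}
    (hinv : Set.MapsTo shiftSeq X X) :
    HasShadowingOn dProd shiftSeq X ↔ ∃ p : ℕ, 1 ≤ p ∧ IsShiftOfOrder X p :=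
  ⟨HasShadowingOn.exists_isShiftOfOrder hinv, fun ⟨_, _, hX⟩ => hX.hasShadowingOn⟩

/-- For a one-sided shift space over a countable alphabet, shadowing with respect to
the standard product ultrametric is equivalent to being a shift of finite order. -/
theorem shadowing_iff_finite_order {A : Type*} [Countable A] (X : Set (ℕ → A))
    (hne : X.Nonempty)
    (hcl : @IsClosed (ℕ → A) (@Pi.topologicalSpace ℕ (fun _ => A) (fun _ => ⊥)) X)
    (hinv : ∀ x ∈ X, shiftSeq x ∈ X) :
    HasShadowingOn dProd shiftSeq X ↔ ∃ p : ℕ, 1 ≤ p ∧ IsShiftOfOrder X p :=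
  shadowing_iff_finite_order_general hinv
end

section
/- Let A be a countable set, X ⊆ A^ℕ a one-sided shift space, and d any prefix ultrametric on X (for example the standard product ultrametric d_prod). Then (X, σ, d) has the shadowing property if and only if it has the Lipschitz shadowing property. Moreover, if shadowing holds, then Lipschitz shadowing holds with Lipschitz constant L = 1. -/
/-- Lipschitz shadowing on `X` with explicit constants `L` and `δ₀`. -/
def HasLipschitzShadowingOnWith {Y : Type*} (d : Y → Y → ℝ) (σ : Y → Y) (X : Set Y)
    (L δ₀ : ℝ) : Prop :=
  ∀ δ : ℝ, 0 < δ → δ ≤ δ₀ → ∀ xs : ℕ → Y, IsPseudoOrbitOn d σ X δ xs →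
    ∃ x ∈ X, ∀ n : ℕ, d (σ^[n] x) (xs n) ≤ L * δ

/-- The Lipschitz shadowing property for `σ` restricted to `X`. -/
def HasLipschitzShadowingOn {Y : Type*} (d : Y → Y → ℝ) (σ : Y → Y) (X : Set Y) : Prop :=
  ∃ L > (0:ℝ), ∃ δ₀ > (0:ℝ), HasLipschitzShadowingOnWith d σ X L δ₀

/-!
Write `m` for the least index with `r m < δ`. In a `δ`-pseudo-orbit `(xⁿ)` consecutive points
overlap in their first `m` letters, `xⁿ_{j+1} = xⁿ⁺¹_j` for `j < m`, so sliding along the overlaps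
gives `xⁿ_j = xⁿ⁺ʲ_0` for `j ≤ m`. A point `x` that shadows at the fixed scale `r 0` satisfies
`x_i = xⁱ_0`; hence `σⁿ x` and `xⁿ` share their first `m` letters, and their distance is at most
`r m < δ`. So a single `δ₀`, the one belonging to `ε = r 0`, serves all smaller scales with
constant `1`.
-/

open Filter Topology

section Shadowing

variable {Y : Type*} {d : Y → Y → ℝ} {σ : Y → Y} {X : Set Y}

theorem IsPseudoOrbitOn.mono {δ δ' : ℝ} {xs : ℕ → Y} (hxs : IsPseudoOrbitOn d σ X δ xs)
    (hδ : δ ≤ δ') : IsPseudoOrbitOn d σ X δ' xs :=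
  fun n => ⟨(hxs n).1, (hxs n).2.trans_le hδ⟩

theorem HasLipschitzShadowingOn.hasShadowingOn (h : HasLipschitzShadowingOn d σ X) :
    HasShadowingOn d σ X := by
  obtain ⟨L, hL, δ₀, hδ₀, hshadow⟩ := h
  intro ε hε
  obtain ⟨η, hη, hLη⟩ : ∃ η > 0, L * η < ε := exists_pos_mul_lt hε L
  have hδ : 0 < min δ₀ η := lt_min hδ₀ hη
  refine ⟨min δ₀ η, hδ, fun xs hxs => ?_⟩
  obtain ⟨x, hx, hclose⟩ := hshadow _ hδ (min_le_left _ _) xs hxs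
  refine ⟨x, hx, fun i => ?_⟩
  calc d (σ^[i] x) (xs i) ≤ L * min δ₀ η := hclose i
    _ ≤ L * η := by gcongr; exact min_le_right _ _
    _ < ε := hLη

end Shadowing

section Sequences

variable {A : Type*}

theorem shiftSeq_iterate_apply (n : ℕ) (x : ℕ → A) (j : ℕ) : shiftSeq^[n] x j = x (j + n) := by
  induction n generalizing x with
  | zero => rfl
  | succ _ ih => exact ih (shiftSeq x)

theorem apply_eq_apply_add_zero_of_shiftSeq_overlap {xs : ℕ → ℕ → A} {m : ℕ}
    (hoverlap : ∀ n, ∀ j < m, shiftSeq (xs n) j = xs (n + 1) j) {j : ℕ} (hj : j ≤ m) (n : ℕ) :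
    xs n j = xs (n + j) 0 := by
  induction j generalizing n with
  | zero => rfl
  | succ j ih =>
    calc xs n (j + 1) = xs (n + 1) j := hoverlap n j hj
      _ = xs (n + 1 + j) 0 := ih (Nat.le_of_succ_le hj) (n + 1)
      _ = xs (n + (j + 1)) 0 := by rw [Nat.add_right_comm, Nat.add_assoc]

end Sequences

/-- On `X`, the function `d` is the prefix distance with scales `r`: distinct sequences that first
differ at index `n` are at distance `r n`. No condition is put on `r` here; `d` is a prefix
ultrametric on `X` when `r` is moreover positive, strictly decreasing and tends to `0`. -/
structure IsPrefixDistOn {A : Type*} (d : (ℕ → A) → (ℕ → A) → ℝ) (r : ℕ → ℝ)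
    (X : Set (ℕ → A)) : Prop where
  self_eq_zero : ∀ x ∈ X, d x x = 0
  eq_of_ne : ∀ x ∈ X, ∀ y ∈ X, x ≠ y → d x y = r (sInf {n : ℕ | x n ≠ y n})

namespace IsPrefixDistOn

variable {A : Type*} {d : (ℕ → A) → (ℕ → A) → ℝ} {r : ℕ → ℝ} {X : Set (ℕ → A)} {x y : ℕ → A}

theorem apply_eq_of_lt (hd : IsPrefixDistOn d r X) (hr : Antitone r) (hx : x ∈ X) (hy : y ∈ X)
    {k : ℕ} (h : d x y < r k) : x k = y k := by
  by_contra hk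
  have hxy : x ≠ y := fun heq => hk (congrFun heq k)
  have hle : r k ≤ d x y := by
    rw [hd.eq_of_ne x hx y hy hxy]
    exact hr (Nat.sInf_le hk)
  exact h.not_ge hle

theorem le_of_forall_lt_apply_eq (hd : IsPrefixDistOn d r X) (hr : Antitone r) (hx : x ∈ X)
    (hy : y ∈ X) {m : ℕ} (hm : 0 ≤ r m) (h : ∀ j < m, x j = y j) : d x y ≤ r m := by
  obtain rfl | hxy := eq_or_ne x y
  · exact (hd.self_eq_zero x hx).trans_le hm
  · have hdiff : {n : ℕ | x n ≠ y n}.Nonempty := Function.ne_iff.mp hxy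
    rw [hd.eq_of_ne x hx y hy hxy]
    exact hr (le_csInf hdiff fun n hn => not_lt.mp fun hlt => hn (h n hlt))

theorem hasLipschitzShadowingOnWith_one (hd : IsPrefixDistOn d r X)
    (hX : Set.MapsTo shiftSeq X X) (hr : Antitone r) (hr_lim : Tendsto r atTop (𝓝 0)) {δ₀ : ℝ}
    (hshadow : ∀ xs : ℕ → ℕ → A, IsPseudoOrbitOn d shiftSeq X δ₀ xs →
      ∃ x ∈ X, ∀ i, d (shiftSeq^[i] x) (xs i) < r 0) :
    HasLipschitzShadowingOnWith d shiftSeq X 1 δ₀ := by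
  classical
  intro δ hδ hδδ₀ xs hxs
  obtain ⟨x, hx, hclose⟩ := hshadow xs (hxs.mono hδδ₀)
  obtain ⟨m, hmδ, hm_min⟩ := Nat.findX (hr_lim.eventually_lt_const hδ).exists
  have hoverlap : ∀ n, ∀ j < m, shiftSeq (xs n) j = xs (n + 1) j := fun n j hj =>
    hd.apply_eq_of_lt hr (hX (hxs n).1) (hxs (n + 1)).1
      ((hxs n).2.trans_le (not_lt.mp (hm_min j hj)))
  have hhead : ∀ i, x i = xs i 0 := fun i => by
    simpa only [shiftSeq_iterate_apply, Nat.zero_add] using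
      hd.apply_eq_of_lt hr (hX.iterate i hx) (hxs i).1 (hclose i)
  have hagree : ∀ n, ∀ j < m, shiftSeq^[n] x j = xs n j := fun n j hj => by
    rw [shiftSeq_iterate_apply, hhead, Nat.add_comm,
      apply_eq_apply_add_zero_of_shiftSeq_overlap hoverlap hj.le]
  refine ⟨x, hx, fun n => ?_⟩
  calc d (shiftSeq^[n] x) (xs n)
      ≤ r m := hd.le_of_forall_lt_apply_eq hr (hX.iterate n hx) (hxs n).1
        (hr.le_of_tendsto hr_lim m) (hagree n)
    _ ≤ 1 * δ := by rw [one_mul]; exact hmδ.le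

end IsPrefixDistOn

theorem prefix_ultrametric_shadowing_iff_lipschitz_general {A : Type*} {X : Set (ℕ → A)}
    (hX : Set.MapsTo shiftSeq X X) {d : (ℕ → A) → (ℕ → A) → ℝ} {r : ℕ → ℝ}
    (hr_anti : Antitone r) (hr_pos : 0 < r 0) (hr_lim : Tendsto r atTop (𝓝 0))
    (hd : IsPrefixDistOn d r X) :
    (HasShadowingOn d shiftSeq X ↔ HasLipschitzShadowingOn d shiftSeq X) ∧
    (HasShadowingOn d shiftSeq X →
      ∃ δ₀ > (0 : ℝ), HasLipschitzShadowingOnWith d shiftSeq X 1 δ₀) := by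
  have lipschitz_one (h : HasShadowingOn d shiftSeq X) :
      ∃ δ₀ > (0 : ℝ), HasLipschitzShadowingOnWith d shiftSeq X 1 δ₀ := by
    obtain ⟨δ₀, hδ₀, hshadow⟩ := h (r 0) hr_pos
    exact ⟨δ₀, hδ₀, hd.hasLipschitzShadowingOnWith_one hX hr_anti hr_lim hshadow⟩
  exact ⟨⟨fun h => ⟨1, one_pos, lipschitz_one h⟩, fun h => h.hasShadowingOn⟩, lipschitz_one⟩

/-- For a one-sided shift space `X ⊆ A^ℕ` with a prefix ultrametric `d`
(determined by a strictly decreasing null sequence `(r_n)` of positive reals),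
shadowing and Lipschitz shadowing coincide, and when shadowing holds, Lipschitz
shadowing holds with Lipschitz constant `L = 1`. -/
theorem prefix_ultrametric_shadowing_iff_lipschitz {A : Type*} [Countable A]
    (X : Set (ℕ → A)) (hne : X.Nonempty)
    (hcl : @IsClosed (ℕ → A) (@Pi.topologicalSpace ℕ (fun _ => A) (fun _ => ⊥)) X)
    (hinv : ∀ x ∈ X, shiftSeq x ∈ X)
    (d : (ℕ → A) → (ℕ → A) → ℝ) (r : ℕ → ℝ)
    (hr_anti : StrictAnti r) (hr_pos : ∀ n : ℕ, 0 < r n)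
    (hr_lim : Filter.Tendsto r Filter.atTop (nhds 0))
    (hd_diag : ∀ x ∈ X, d x x = 0)
    (hd_off : ∀ x ∈ X, ∀ y ∈ X, x ≠ y → d x y = r (sInf {n : ℕ | x n ≠ y n})) :
    (HasShadowingOn d shiftSeq X ↔ HasLipschitzShadowingOn d shiftSeq X) ∧
    (HasShadowingOn d shiftSeq X →
      ∃ δ₀ > (0:ℝ), HasLipschitzShadowingOnWith d shiftSeq X 1 δ₀) :=
  prefix_ultrametric_shadowing_iff_lipschitz_general hinv hr_anti.antitone (hr_pos 0) hr_lim
    ⟨hd_diag, hd_off⟩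
end

section
/- Let A be a countably infinite set. For every enumeration P of Σ_A^fin, the function d_P is an ultrametric on Σ_A: d_P(x,y) = 0 if and only if x = y, d_P(x,y) = d_P(y,x) for all x,y, and d_P(x,y) ≤ max{d_P(x,z), d_P(z,y)} for all x, y, z ∈ Σ_A. -/
/-- The Ott–Tomforde–Willis full shift `Σ_A = A^ℕ ⊔ Σ_A^fin`: infinite words are
functions `ℕ → A`, finite words (including the empty word `[]`) are lists. -/
abbrev OTWFullShift (A : Type*) := (ℕ → A) ⊕ List A

/-- `u ⪯ x`: the finite word `u` is an initial segment of `x ∈ Σ_A`. -/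
def OTWPre {A : Type*} (u : List A) : OTWFullShift A → Prop
  | Sum.inl f => ∀ i : Fin u.length, u.get i = f i
  | Sum.inr v => u <+: v

/-- The shift map on `Σ_A`: delete the first symbol (finite words of length `≤ 1`
are sent to the empty word). -/
def otwShift {A : Type*} : OTWFullShift A → OTWFullShift A
  | Sum.inl f => Sum.inl fun n => f (n + 1)
  | Sum.inr v => Sum.inr v.tail

/-- The Deaconu–Renault domain `D = Σ_A ∖ {∅}`. -/
def otwDomain (A : Type*) : Set (OTWFullShift A) := {x | x ≠ Sum.inr []}

/-- `P` is an enumeration of `Σ_A^fin` indexed by `{1, 2, 3, …}`: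
`j ↦ P j` is a bijection from `{1, 2, …}` onto the finite words
(the value `P 0` is irrelevant). -/
def IsEnumeration {A : Type*} (P : ℕ → List A) : Prop :=
  Function.Bijective fun k : ℕ => P (k + 1)

open Classical in
/-- The OTW metric attached to the enumeration `P`:
`d_P(x,y) = 2^{-i}` where `i = min{j ≥ 1 : exactly one of P j ⪯ x, P j ⪯ y}`. -/
noncomputable def otwDist {A : Type*} (P : ℕ → List A) (x y : OTWFullShift A) : ℝ :=
  if x = y then 0
  else (1 / 2 : ℝ) ^ sInf {j : ℕ | 1 ≤ j ∧ Xor' (OTWPre (P j) x) (OTWPre (P j) y)}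

/-!
A point of `Σ_A` is determined by its finite initial segments, so recording which of the words
`P 1, P 2, …` are initial segments of `x` embeds `Σ_A` into the binary sequences. The OTW metric is
the pullback along this embedding of the first-difference ultrametric on sequences.
-/

theorem firstDiff_eq_sInf {E : ℕ → Type*} (x y : ∀ n, E n) :
    PiNat.firstDiff x y = sInf {n | x n ≠ y n} := by
  rcases eq_or_ne x y with rfl | hxy
  · simp [PiNat.firstDiff_def]
  · have hmem : x (PiNat.firstDiff x y) ≠ y (PiNat.firstDiff x y) := PiNat.apply_firstDiff_ne hxy
    have hle : ∀ n ∈ {n | x n ≠ y n}, PiNat.firstDiff x y ≤ n := fun n hn =>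
      not_lt.mp fun hlt => hn (PiNat.apply_eq_of_lt_firstDiff hlt)
    exact le_antisymm (hle _ (Nat.sInf_mem ⟨_, hmem⟩)) (Nat.sInf_le hmem)

section OTW

variable {A : Type*}

theorem otwPre_ofFn_inl (f : ℕ → A) (n : ℕ) :
    OTWPre (List.ofFn fun i : Fin n => f i) (Sum.inl f) := by
  intro i
  simp

theorem eq_of_otwPre_ofFn_inl {f g : ℕ → A}
    (h : ∀ n, OTWPre (List.ofFn fun i : Fin n => f i) (Sum.inl g)) : f = g := by
  funext n
  simpa only [List.get_ofFn, Fin.val_cast] using h (n + 1) ⟨n, by simp⟩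

theorem not_otwPre_ofFn_inr (f : ℕ → A) (v : List A) :
    ¬ OTWPre (List.ofFn fun i : Fin (v.length + 1) => f i) (Sum.inr v) := by
  intro h
  simpa using List.IsPrefix.length_le h

theorem eq_of_forall_otwPre_iff {x y : OTWFullShift A} (h : ∀ u, OTWPre u x ↔ OTWPre u y) :
    x = y := by
  rcases x with f | v <;> rcases y with g | w
  · exact congrArg Sum.inl (eq_of_otwPre_ofFn_inl fun n => (h _).mp (otwPre_ofFn_inl f n))
  · exact absurd ((h _).mp (otwPre_ofFn_inl f _)) (not_otwPre_ofFn_inr f w)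
  · exact absurd ((h _).mpr (otwPre_ofFn_inl g _)) (not_otwPre_ofFn_inr g v)
  · have hvw : v <+: w := (h v).mp List.prefix_rfl
    have hwv : w <+: v := (h w).mpr List.prefix_rfl
    exact congrArg Sum.inr (hvw.eq_of_length_le hwv.length_le)

/-- The binary sequence recording which of the words `P 1, P 2, …` are initial segments of `x`.
Its entry at `0` is always `False`, so that indices agree with those in `otwDist`. -/
def otwCode (P : ℕ → List A) (x : OTWFullShift A) : ℕ → Prop :=
  fun j => 1 ≤ j ∧ OTWPre (P j) x

theorem otwCode_apply_ne_iff {P : ℕ → List A} {x y : OTWFullShift A} {j : ℕ} :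
    otwCode P x j ≠ otwCode P y j ↔ 1 ≤ j ∧ Xor (OTWPre (P j) x) (OTWPre (P j) y) := by
  rw [ne_eq, eq_iff_iff, xor_iff_not_iff, ← Classical.not_imp]
  exact not_congr and_congr_right_iff

theorem otwCode_injective {P : ℕ → List A} (hP : Set.SurjOn P (Set.Ici 1) Set.univ) :
    Function.Injective (otwCode P) := by
  refine fun x y hxy => eq_of_forall_otwPre_iff fun u => ?_
  obtain ⟨j, hj, rfl⟩ := hP (Set.mem_univ u)
  exact and_congr_right_iff.mp (iff_of_eq (congrFun hxy j)) hj

theorem IsEnumeration.surjOn {P : ℕ → List A} (hP : IsEnumeration P) :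
    Set.SurjOn P (Set.Ici 1) Set.univ := by
  intro u _
  obtain ⟨k, hk⟩ := hP.surjective u
  exact ⟨k + 1, Nat.le_add_left 1 k, hk⟩

attribute [local instance] PiNat.dist

theorem otwDist_eq_dist_otwCode {P : ℕ → List A} (hP : Set.SurjOn P (Set.Ici 1) Set.univ)
    (x y : OTWFullShift A) : otwDist P x y = dist (otwCode P x) (otwCode P y) := by
  rcases eq_or_ne x y with rfl | hxy
  · rw [otwDist, if_pos rfl, PiNat.dist_self]
  · rw [otwDist, if_neg hxy, PiNat.dist_eq_of_ne ((otwCode_injective hP).ne hxy),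
      firstDiff_eq_sInf]
    simp only [otwCode_apply_ne_iff]
    rfl

theorem otwDist_is_ultrametric_general {P : ℕ → List A}
    (hP : Set.SurjOn P (Set.Ici 1) Set.univ) :
    (∀ x y : OTWFullShift A, otwDist P x y = 0 ↔ x = y) ∧
    (∀ x y : OTWFullShift A, otwDist P x y = otwDist P y x) ∧
    (∀ x y z : OTWFullShift A,
      otwDist P x y ≤ max (otwDist P x z) (otwDist P z y)) := by
  simp only [otwDist_eq_dist_otwCode hP]
  refine ⟨fun x y => ⟨fun h => ?_, fun h => ?_⟩, fun x y => PiNat.dist_comm _ _,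
    fun x y z => PiNat.dist_triangle_nonarch _ _ _⟩
  · exact otwCode_injective hP (PiNat.eq_of_dist_eq_zero _ _ h)
  · rw [h, PiNat.dist_self]

end OTW

/-- For every enumeration `P` of the finite words, `d_P` is an ultrametric on the
OTW full shift `Σ_A`. -/
theorem otwDist_is_ultrametric {A : Type*} [Countable A] [Infinite A]
    (P : ℕ → List A) (hP : IsEnumeration P) :
    (∀ x y : OTWFullShift A, otwDist P x y = 0 ↔ x = y) ∧
    (∀ x y : OTWFullShift A, otwDist P x y = otwDist P y x) ∧
    (∀ x y z : OTWFullShift A,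
      otwDist P x y ≤ max (otwDist P x z) (otwDist P z y)) :=
  otwDist_is_ultrametric_general hP.surjOn
end

section
/- Let A be a countably infinite set. For every enumeration P of Σ_A^fin, the Ott–Tomforde–Willis full shift (Σ_A, σ) with domain D = Σ_A ∖ {∅} has the shadowing property with respect to the OTW metric d_P. -/
/-- A `δ`-pseudo-orbit for the system `(Σ_A, σ, D)` with respect to `d`. -/
def IsDeltaPseudoOrbit {X : Type*} (d : X → X → ℝ) (σ : X → X) (D : Set X)
    (δ : ℝ) (xs : ℕ → X) : Prop :=
  ∀ n : ℕ, xs n ∈ D ∧ d (σ (xs n)) (xs (n + 1)) < δ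

/-- The shadowing property for the system `(X, σ, D)` with respect to `d`. -/
def HasShadowing {X : Type*} (d : X → X → ℝ) (σ : X → X) (D : Set X) : Prop :=
  ∀ ε > (0:ℝ), ∃ δ > (0:ℝ), ∀ xs : ℕ → X, IsDeltaPseudoOrbit d σ D δ xs →
    ∃ x : X, (∀ j : ℕ, σ^[j] x ∈ D) ∧ ∀ i : ℕ, d (σ^[i] x) (xs i) < ε

/-- The Lipschitz shadowing property for the system `(X, σ, D)` with respect to `d`. -/
def HasLipschitzShadowing {X : Type*} (d : X → X → ℝ) (σ : X → X) (D : Set X) : Prop :=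
  ∃ L > (0:ℝ), ∃ δ₀ > (0:ℝ), ∀ δ : ℝ, 0 < δ → δ ≤ δ₀ →
    ∀ xs : ℕ → X, IsDeltaPseudoOrbit d σ D δ xs →
      ∃ x : X, (∀ j : ℕ, σ^[j] x ∈ D) ∧ ∀ n : ℕ, d (σ^[n] x) (xs n) ≤ L * δ

/-!
Two points of `Σ_A` are `d_P`-close exactly when they have the same prefixes among finitely many
prescribed words. Whether `b :: v` is a prefix of `x` is decided by the first letter of `x` and by
whether `v` is a prefix of `σ x`. Hence, for a suffix-closed set `S` of words, a pseudo-orbit whose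
jumps preserve the prefixes in `S` is determined, as far as prefixes in `S` are concerned, by its
sequence of first letters. The infinite word formed by these letters has an orbit with the same
first letters, so it shadows the pseudo-orbit; `S` is taken to be the finite set of all suffixes
of the words relevant for `ε`.
-/

section

variable {A : Type*}

/-- The first letter of a word of the full shift, or `none` for the empty word. -/
def otwHead? : OTWFullShift A → Option A
  | Sum.inl f => some (f 0)
  | Sum.inr v => v.head?

/-- The points `x` and `y` have the same prefixes among the words in `S`. For finite `S` these
relations form a basis of the uniformity of the OTW metrics. -/
def OTWAgreeOn (S : Set (List A)) (x y : OTWFullShift A) : Prop :=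
  ∀ u ∈ S, OTWPre u x ↔ OTWPre u y

/-- The set of all suffixes of words in `S`, i.e. the smallest set containing `S` that is closed
under deleting the first letter. -/
def wordSuffixes (S : Set (List A)) : Set (List A) :=
  {u | ∃ w ∈ S, u <:+ w}

theorem otwPre_nil (x : OTWFullShift A) : OTWPre [] x := by
  cases x with
  | inl f => exact fun i => i.elim0
  | inr v => exact List.nil_prefix

theorem otwPre_cons_iff (b : A) (v : List A) (x : OTWFullShift A) :
    OTWPre (b :: v) x ↔ otwHead? x = some b ∧ OTWPre v (otwShift x) := by
  rcases x with f | _ | ⟨a, w⟩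
  · simp [OTWPre, otwHead?, otwShift, Fin.forall_fin_succ, eq_comm]
  · simp [OTWPre, otwHead?]
  · simp [OTWPre, otwHead?, otwShift, List.cons_prefix_cons, eq_comm]

theorem exists_otwHead?_eq_some {x : OTWFullShift A} (hx : x ∈ otwDomain A) :
    ∃ a, otwHead? x = some a := by
  rcases x with f | _ | ⟨a, w⟩
  · exact ⟨f 0, rfl⟩
  · exact absurd rfl hx
  · exact ⟨a, rfl⟩

theorem otwShift_iterate_inl (f : ℕ → A) (n : ℕ) :
    otwShift^[n] (Sum.inl f) = Sum.inl fun k => f (k + n) := by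
  induction n with
  | zero => rfl
  | succ n ih =>
    rw [Function.iterate_succ_apply', ih]
    simp only [otwShift, Nat.add_right_comm, Nat.add_assoc]

theorem otwPre_map_range_inl (f : ℕ → A) (n : ℕ) :
    OTWPre ((List.range n).map f) (Sum.inl f) := by
  intro i
  simp

theorem not_forall_otwPre_inl_iff_inr (f : ℕ → A) (v : List A) :
    ¬ ∀ u, OTWPre u (Sum.inl f) ↔ OTWPre u (Sum.inr v) := by
  intro h
  have too_long : (List.range (v.length + 1)).map f <+: v := (h _).1 (otwPre_map_range_inl f _)
  simpa using too_long.length_le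

namespace OTWAgreeOn

theorem refl (S : Set (List A)) (x : OTWFullShift A) : OTWAgreeOn S x x :=
  fun _ _ => Iff.rfl

theorem mono {S T : Set (List A)} {x y : OTWFullShift A} (hST : S ⊆ T) (h : OTWAgreeOn T x y) :
    OTWAgreeOn S x y :=
  fun u hu => h u (hST hu)

theorem of_otwHead?_eq {S : Set (List A)} (hS : ∀ b v, b :: v ∈ S → v ∈ S)
    {xs ys : ℕ → OTWFullShift A}
    (hxs : ∀ n, OTWAgreeOn S (otwShift (xs n)) (xs (n + 1)))
    (hys : ∀ n, OTWAgreeOn S (otwShift (ys n)) (ys (n + 1)))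
    (hhead : ∀ n, otwHead? (xs n) = otwHead? (ys n)) (n : ℕ) :
    OTWAgreeOn S (xs n) (ys n) := by
  intro u hu
  induction u generalizing n with
  | nil => exact iff_of_true (otwPre_nil _) (otwPre_nil _)
  | cons b v ih =>
    have hv : v ∈ S := hS b v hu
    calc OTWPre (b :: v) (xs n)
        ↔ otwHead? (xs n) = some b ∧ OTWPre v (xs (n + 1)) := by
          rw [otwPre_cons_iff, hxs n v hv]
      _ ↔ otwHead? (ys n) = some b ∧ OTWPre v (ys (n + 1)) := by
          rw [hhead n, ih (n + 1) hv]
      _ ↔ OTWPre (b :: v) (ys n) := by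
          rw [otwPre_cons_iff, hys n v hv]

end OTWAgreeOn

theorem exists_forall_otwAgreeOn_iterate {S : Set (List A)} (hS : ∀ b v, b :: v ∈ S → v ∈ S)
    {xs : ℕ → OTWFullShift A} (hdom : ∀ n, xs n ∈ otwDomain A)
    (hxs : ∀ n, OTWAgreeOn S (otwShift (xs n)) (xs (n + 1))) :
    ∃ x, (∀ n, otwShift^[n] x ∈ otwDomain A) ∧ ∀ n, OTWAgreeOn S (otwShift^[n] x) (xs n) := by
  choose f hf using fun n => exists_otwHead?_eq_some (hdom n)
  refine ⟨Sum.inl f, fun n => ?_, OTWAgreeOn.of_otwHead?_eq hS (fun n => ?_) hxs fun n => ?_⟩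
  · simp [otwShift_iterate_inl, otwDomain]
  · rw [Function.iterate_succ_apply']
    exact OTWAgreeOn.refl S _
  · rw [otwShift_iterate_inl, hf n]
    simp [otwHead?]

theorem subset_wordSuffixes (S : Set (List A)) : S ⊆ wordSuffixes S :=
  fun w hw => ⟨w, hw, List.suffix_rfl⟩

theorem mem_wordSuffixes_of_cons_mem {S : Set (List A)} (b : A) (v : List A)
    (h : b :: v ∈ wordSuffixes S) : v ∈ wordSuffixes S := by
  obtain ⟨w, hw, hbv⟩ := h
  exact ⟨w, hw, (List.suffix_cons b v).trans hbv⟩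

theorem finite_wordSuffixes {S : Set (List A)} (hS : S.Finite) : (wordSuffixes S).Finite := by
  have hunion : wordSuffixes S = ⋃ w ∈ S, {u | u ∈ w.tails} := by
    ext u
    simp [wordSuffixes]
  rw [hunion]
  exact hS.biUnion fun w _ => List.finite_toSet w.tails

theorem otwDist_of_ne (P : ℕ → List A) {x y : OTWFullShift A} (hxy : x ≠ y) :
    otwDist P x y =
      (1 / 2 : ℝ) ^ sInf {j : ℕ | 1 ≤ j ∧ ¬ (OTWPre (P j) x ↔ OTWPre (P j) y)} := by
  simp only [otwDist, if_neg hxy, ← xor_iff_not_iff]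
  rfl

theorem otwDist_lt_pow_iff {P : ℕ → List A}
    (hP : Function.Surjective fun k : ℕ => P (k + 1)) {x y : OTWFullShift A} {N : ℕ} :
    otwDist P x y < (1 / 2 : ℝ) ^ N ↔ OTWAgreeOn (P '' Set.Icc 1 N) x y := by
  by_cases hxy : x = y
  · subst hxy
    simp [otwDist, OTWAgreeOn.refl]
  have hne : {j : ℕ | 1 ≤ j ∧ ¬ (OTWPre (P j) x ↔ OTWPre (P j) y)}.Nonempty := by
    by_contra hempty
    refine hxy (eq_of_forall_otwPre_iff fun u => ?_)
    obtain ⟨k, rfl⟩ := hP u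
    by_contra hk
    exact hempty ⟨k + 1, k.succ_pos, hk⟩
  rw [otwDist_of_ne P hxy, pow_lt_pow_iff_right_of_lt_one₀ (by norm_num) (by norm_num),
    ← Nat.succ_le_iff, le_csInf_iff (OrderBot.bddBelow _) hne]
  simp only [OTWAgreeOn, Set.forall_mem_image, Set.mem_Icc, Set.mem_ofPred_eq]
  refine forall_congr' fun j => ⟨fun h hj => ?_, fun h hj => ?_⟩
  · by_contra hdiff
    have := h ⟨hj.1, hdiff⟩
    omega
  · by_contra hlt
    exact hj.2 (h ⟨hj.1, by omega⟩)

theorem exists_finite_forall_otwAgreeOn_otwDist_lt {P : ℕ → List A}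
    (hP : Function.Surjective fun k : ℕ => P (k + 1)) {ε : ℝ} (hε : 0 < ε) :
    ∃ S : Set (List A), S.Finite ∧ ∀ x y, OTWAgreeOn S x y → otwDist P x y < ε := by
  obtain ⟨N, hN⟩ := exists_pow_lt_of_lt_one hε (by norm_num : (1 / 2 : ℝ) < 1)
  exact ⟨P '' Set.Icc 1 N, (Set.finite_Icc 1 N).image P,
    fun x y hxy => ((otwDist_lt_pow_iff hP).2 hxy).trans hN⟩

theorem exists_pos_forall_otwDist_lt_otwAgreeOn {P : ℕ → List A}
    (hP : Function.Surjective fun k : ℕ => P (k + 1)) {S : Set (List A)} (hS : S.Finite) :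
    ∃ δ > (0 : ℝ), ∀ x y, otwDist P x y < δ → OTWAgreeOn S x y := by
  obtain ⟨index, hindex⟩ := hP.hasRightInverse
  obtain ⟨M, hM⟩ := (hS.image index).bddAbove
  have hsub : S ⊆ P '' Set.Icc 1 (M + 1) := fun u hu =>
    ⟨index u + 1, ⟨Nat.succ_pos _, Nat.succ_le_succ (hM ⟨u, hu, rfl⟩)⟩, hindex u⟩
  exact ⟨(1 / 2) ^ (M + 1), by positivity,
    fun x y hxy => ((otwDist_lt_pow_iff hP).1 hxy).mono hsub⟩

theorem otw_full_shift_shadowing_general {P : ℕ → List A}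
    (hP : Function.Surjective fun k : ℕ => P (k + 1)) :
    HasShadowing (otwDist P) otwShift (otwDomain A) := by
  intro ε hε
  obtain ⟨S, hSfin, hSε⟩ := exists_finite_forall_otwAgreeOn_otwDist_lt hP hε
  obtain ⟨δ, hδ, hδS⟩ := exists_pos_forall_otwDist_lt_otwAgreeOn hP (finite_wordSuffixes hSfin)
  refine ⟨δ, hδ, fun xs hxs => ?_⟩
  obtain ⟨x, hxdom, hx⟩ := exists_forall_otwAgreeOn_iterate mem_wordSuffixes_of_cons_mem
    (fun n => (hxs n).1) fun n => hδS _ _ (hxs n).2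
  exact ⟨x, hxdom, fun n => hSε _ _ ((hx n).mono (subset_wordSuffixes S))⟩

end

/-- For every enumeration `P`, the OTW full shift with Deaconu–Renault domain
`D = Σ_A ∖ {∅}` has the shadowing property with respect to `d_P`. -/
theorem otw_full_shift_shadowing {A : Type*} [Countable A] [Infinite A]
    (P : ℕ → List A) (hP : IsEnumeration P) :
    HasShadowing (otwDist P) otwShift (otwDomain A) :=
  otw_full_shift_shadowing_general hP.surjective
end

section
/- Let A be a countably infinite set. There exist a strictly increasing sequence i_1 < i_2 < ⋯ of positive integers and an enumeration Q = {q_k}_{k≥1} of Σ_A^fin such that for each n ≥ 1 there exist pairwise distinct letters a_1^{(n)}, a_2^{(n)}, a_3^{(n)}, b^{(n)} ∈ A with: (i) i_n > n and q_{i_n − n} = a_1^{(n)} a_2^{(n)} a_3^{(n)}; (ii) no word among q_1, …, q_{i_n} starts with a_2^{(n)}; (iii) the letter b^{(n)} does not occur in any word among q_1, …, q_{i_n}. -/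
/-!
Enumerate the words in stages, each stage extending the finite list produced by the previous one.
Stage `n` first appends the `n`-th word of some fixed enumeration, or any new word if that one is
already listed, so that every word is eventually reached. The letters used so far form a finite set,
so there are five fresh letters `a₁, a₂, a₃, b, c`; now append `a₁a₂a₃` followed by the `n` words
`c, cc, …, cⁿ`. The stage thus ends exactly `n` places after `a₁a₂a₃`, without having used `b` at
all or `a₂` as a first letter.
-/

section PrefixChains

variable {α : Type*}

theorem exists_map_range_eq_of_prefix_chain {S : ℕ → List α}
    (prefix_succ : ∀ n, S n <+: S (n + 1)) (length_strictMono : StrictMono fun n => (S n).length) :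
    ∃ f : ℕ → α, ∀ n, (List.range (S n).length).map f = S n := by
  have prefix_of_le {m n : ℕ} (hmn : m ≤ n) : S m <+: S n :=
    Nat.rel_of_forall_rel_succ_of_le (· <+: ·) prefix_succ hmn
  have lt_length (k : ℕ) : k < (S (k + 1)).length := length_strictMono.le_apply (x := k + 1)
  refine ⟨fun k => (S (k + 1))[k]'(lt_length k), fun n => ?_⟩
  refine List.ext_getElem (by simp) fun k _ hk => ?_
  rw [List.getElem_map, List.getElem_range]
  rcases le_total n (k + 1) with h | h
  · exact ((prefix_of_le h).getElem hk).symm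
  · exact (prefix_of_le h).getElem (lt_length k)

theorem bijective_of_nodup_map_range {f : ℕ → α} {I : ℕ → ℕ} (hI : StrictMono I)
    (nodup : ∀ n, ((List.range (I n)).map f).Nodup)
    (exhaust : ∀ x, ∃ n, x ∈ (List.range (I n)).map f) : Function.Bijective f := by
  constructor
  · intro i j hij
    have mem_range {k : ℕ} (hk : k ≤ max i j) : k ∈ List.range (I (max i j + 1)) :=
      List.mem_range.2 ((Nat.lt_succ_of_le hk).trans_le hI.le_apply)
    exact List.inj_on_of_nodup_map (nodup _) (mem_range (le_max_left i j))
      (mem_range (le_max_right i j)) hij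
  · intro x
    obtain ⟨n, hx⟩ := exhaust x
    obtain ⟨k, -, hk⟩ := List.mem_map.1 hx
    exact ⟨k, hk⟩

theorem exists_nodup_extension_mem_length_lt [Infinite α] {L : List α} (hL : L.Nodup) (x : α) :
    ∃ L', L <+: L' ∧ L'.Nodup ∧ x ∈ L' ∧ L.length < L'.length := by
  have append_singleton {y : α} (hy : y ∉ L) : (L ++ [y]).Nodup := by
    simpa using hL.concat hy
  by_cases hx : x ∈ L
  · obtain ⟨y, hy⟩ := L.finite_toSet.exists_notMem
    exact ⟨L ++ [y], List.prefix_append _ _, append_singleton hy, by simp [hx], by simp⟩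
  · exact ⟨L ++ [x], List.prefix_append _ _, append_singleton hx, by simp, by simp⟩

theorem exists_bijective_forall_map_range [Countable α] [Infinite α] {P : ℕ → List α → Prop}
    (extend : ∀ n (L : List α), L.Nodup → ∃ L', L <+: L' ∧ L'.Nodup ∧ P n L') :
    ∃ (f : ℕ → α) (I : ℕ → ℕ), Function.Bijective f ∧ StrictMono I ∧
      ∀ n, P n ((List.range (I n)).map f) := by
  obtain ⟨e, he⟩ := exists_surjective_nat α
  have step (n : ℕ) (L : {L : List α // L.Nodup}) : ∃ L' : {L : List α // L.Nodup},
      L.1 <+: L'.1 ∧ L.1.length < L'.1.length ∧ e n ∈ L'.1 ∧ P n L'.1 := by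
    obtain ⟨M, hLM, hM, mem_M, lt_M⟩ := exists_nodup_extension_mem_length_lt L.2 (e n)
    obtain ⟨L', hML', hL', hP⟩ := extend n M hM
    exact ⟨⟨L', hL'⟩, hLM.trans hML', lt_M.trans_le hML'.length_le, hML'.subset mem_M, hP⟩
  choose next next_prefix next_length next_mem next_P using step
  let S : ℕ → {L : List α // L.Nodup} := fun n => Nat.rec ⟨[], List.nodup_nil⟩ next n
  have length_strictMono : StrictMono fun n => (S n).1.length :=
    strictMono_nat_of_lt_succ fun n => next_length n (S n)
  obtain ⟨f, hf⟩ :=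
    exists_map_range_eq_of_prefix_chain (fun n => next_prefix n (S n)) length_strictMono
  have map_succ (n : ℕ) : (List.range (S (n + 1)).1.length).map f = (next n (S n)).1 := hf (n + 1)
  refine ⟨f, fun n => (S (n + 1)).1.length, ?_, length_strictMono.comp Order.succ_strictMono,
    fun n => (map_succ n).symm ▸ next_P n (S n)⟩
  refine bijective_of_nodup_map_range length_strictMono (fun n => (hf n).symm ▸ (S n).2) fun x => ?_
  obtain ⟨n, rfl⟩ := he x
  exact ⟨n + 1, (map_succ n).symm ▸ next_mem n (S n)⟩

end PrefixChains

section Words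

variable {A : Type*}

theorem exists_injective_forall_notMem_of_mem [Infinite A] (L : List (List A)) :
    ∃ g : ℕ → A, Function.Injective g ∧ ∀ i, ∀ u ∈ L, g i ∉ u := by
  let g := L.flatten.finite_toSet.infinite_compl.natEmbedding
  exact ⟨fun i => g i, Subtype.val_injective.comp g.injective,
    fun i u hu hi => (g i).2 (List.mem_flatten_of_mem hu hi)⟩

/-- The words `c, cc, …, cⁿ`, used as padding; the empty power is left out so that each of them
contains `c`. -/
def letterPowers (c : A) (n : ℕ) : List (List A) :=
  (List.range n).map fun i => List.replicate (i + 1) c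

theorem length_letterPowers (c : A) (n : ℕ) : (letterPowers c n).length = n := by
  simp [letterPowers]

theorem nodup_letterPowers (c : A) (n : ℕ) : (letterPowers c n).Nodup :=
  List.nodup_range.map fun i j hij => by simpa using congrArg List.length hij

theorem mem_iff_eq_of_mem_letterPowers {c : A} {n : ℕ} {u : List A} (hu : u ∈ letterPowers c n)
    {x : A} : x ∈ u ↔ x = c := by
  obtain ⟨i, -, rfl⟩ := List.mem_map.1 hu
  simp

theorem nodup_append_cons_letterPowers {L : List (List A)} (hL : L.Nodup) {w : List A} (hw : w ∉ L)
    {c : A} (hcL : ∀ u ∈ L, c ∉ u) (hcw : c ∉ w) (n : ℕ) :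
    (L ++ w :: letterPowers c n).Nodup := by
  have mem_power {u : List A} (hu : u ∈ letterPowers c n) : c ∈ u :=
    (mem_iff_eq_of_mem_letterPowers hu).2 rfl
  refine hL.append ((nodup_letterPowers c n).cons fun h => hcw (mem_power h)) ?_
  exact List.disjoint_cons_right.2 ⟨hw, fun u huL hu => hcL u huL (mem_power hu)⟩

/-- The condition imposed on the initial segment `L = q₁, …, q_{iₙ}` of the enumeration: the word
`a₁a₂a₃` is followed by exactly `n` further words, no word of `L` starts with `a₂`, and none
contains `b`. Splitting `L` at `a₁a₂a₃` avoids the subtraction in the index `iₙ - n`. -/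
def IsBadSegment (n : ℕ) (L : List (List A)) : Prop :=
  ∃ a₁ a₂ a₃ b : A, [a₁, a₂, a₃, b].Nodup ∧
    (∃ L₁ L₂, L = L₁ ++ [a₁, a₂, a₃] :: L₂ ∧ L₂.length = n) ∧
    (∀ u ∈ L, u.head? ≠ some a₂) ∧ ∀ u ∈ L, b ∉ u

theorem exists_nodup_extension_isBadSegment [Infinite A] (n : ℕ) (L : List (List A))
    (hL : L.Nodup) : ∃ L', L <+: L' ∧ L'.Nodup ∧ IsBadSegment n L' := by
  obtain ⟨g, g_inj, g_fresh⟩ := exists_injective_forall_notMem_of_mem L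
  have word_notMem : [g 0, g 1, g 2] ∉ L := fun h => g_fresh 0 _ h (by simp)
  have letter_notMem {i : ℕ} (hi : i ≠ 4) : ∀ u ∈ letterPowers (g 4) n, g i ∉ u :=
    fun u hu h => hi (g_inj ((mem_iff_eq_of_mem_letterPowers hu).1 h))
  refine ⟨L ++ [g 0, g 1, g 2] :: letterPowers (g 4) n, List.prefix_append _ _,
    nodup_append_cons_letterPowers hL word_notMem (g_fresh 4) (by simp [g_inj.eq_iff]) n,
    g 0, g 1, g 2, g 3, by simp [g_inj.eq_iff], ⟨L, _, rfl, length_letterPowers _ _⟩, ?_, ?_⟩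
  · refine List.forall_mem_append.2 ⟨fun u hu h => g_fresh 1 u hu (List.mem_of_head? h), ?_⟩
    refine List.forall_mem_cons.2 ⟨by simp [g_inj.eq_iff], fun u hu h => ?_⟩
    exact letter_notMem (by decide) u hu (List.mem_of_head? h)
  · refine List.forall_mem_append.2 ⟨g_fresh 3, ?_⟩
    exact List.forall_mem_cons.2 ⟨by simp [g_inj.eq_iff], letter_notMem (by decide)⟩

end Words

/-- There exist a strictly increasing sequence of indices `i_1 < i_2 < ⋯` and an
enumeration `Q` of the finite words such that, for each `n ≥ 1`, there are
pairwise distinct letters `a₁, a₂, a₃, b` with: (i) `i_n > n` and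
`q_{i_n - n} = a₁a₂a₃`; (ii) no word among `q_1, …, q_{i_n}` starts with `a₂`;
(iii) `b` does not occur in any word among `q_1, …, q_{i_n}`. -/
theorem exists_bad_enumeration {A : Type*} [Countable A] [Infinite A] :
    ∃ (I : ℕ → ℕ) (Q : ℕ → List A), IsEnumeration Q ∧
      (∀ n : ℕ, 1 ≤ n → I n < I (n + 1)) ∧
      (∀ n : ℕ, 1 ≤ n → ∃ a₁ a₂ a₃ b : A,
        a₁ ≠ a₂ ∧ a₁ ≠ a₃ ∧ a₁ ≠ b ∧ a₂ ≠ a₃ ∧ a₂ ≠ b ∧ a₃ ≠ b ∧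
        n < I n ∧ Q (I n - n) = [a₁, a₂, a₃] ∧
        (∀ k : ℕ, 1 ≤ k → k ≤ I n → (Q k).head? ≠ some a₂) ∧
        (∀ k : ℕ, 1 ≤ k → k ≤ I n → b ∉ Q k)) := by
  obtain ⟨f, I, f_bij, I_mono, bad⟩ :=
    exists_bijective_forall_map_range (exists_nodup_extension_isBadSegment (A := A))
  refine ⟨I, fun k => f (k - 1), f_bij, fun n _ => I_mono n.lt_succ_self, fun n _ => ?_⟩
  obtain ⟨a₁, a₂, a₃, b, distinct, ⟨L₁, L₂, split, length_L₂⟩, head_ne, b_notMem⟩ := bad n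
  have mem_segment (k : ℕ) (one_le : 1 ≤ k) (le_I : k ≤ I n) :
      f (k - 1) ∈ (List.range (I n)).map f :=
    List.mem_map_of_mem (List.mem_range.2 (by omega))
  have I_eq : I n = L₁.length + (n + 1) := by
    simpa [length_L₂] using congrArg List.length split
  have index_eq : I n - n - 1 = L₁.length := by omega
  have word_at : f L₁.length = [a₁, a₂, a₃] := by
    simpa [I_eq] using congrArg (·[L₁.length]?) split
  simp only [List.nodup_cons, List.mem_cons, List.not_mem_nil, or_false, not_or] at distinct
  obtain ⟨⟨h₁₂, h₁₃, h₁b⟩, ⟨h₂₃, h₂b⟩, h₃b, -⟩ := distinct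
  refine ⟨a₁, a₂, a₃, b, h₁₂, h₁₃, h₁b, h₂₃, h₂b, h₃b, by omega,
    (congrArg f index_eq).trans word_at, fun k h h' => head_ne _ (mem_segment k h h'),
    fun k h h' => b_notMem _ (mem_segment k h h')⟩
end

section
/- Let A be a countably infinite set, Q an enumeration of Σ_A^fin, i ≥ 1 an index, and a_1, a_2, a_3, b ∈ A pairwise distinct letters such that no word among q_1, …, q_i starts with a_2 and b does not occur in any word among q_1, …, q_i. Define infinite words x^{2k} := a_1 a_2 a_3 b b b ⋯ and x^{2k+1} := b a_1 a_2 a_3 b b b ⋯ for all k ≥ 0. Then d_Q(σ(x^m), x^{m+1}) < 2^{-i} for all m ≥ 0; that is, (x^m)_{m≥0} is a 2^{-i}-pseudo-orbit for (Σ_A, σ, d_Q). -/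
/-- The infinite word `a₁ a₂ a₃ b b b ⋯`. -/
def wordEven {A : Type*} (a₁ a₂ a₃ b : A) : OTWFullShift A :=
  Sum.inl fun t => if t = 0 then a₁ else if t = 1 then a₂ else if t = 2 then a₃ else b

/-- The infinite word `b a₁ a₂ a₃ b b b ⋯`. -/
def wordOdd {A : Type*} (a₁ a₂ a₃ b : A) : OTWFullShift A :=
  Sum.inl fun t =>
    if t = 0 then b else if t = 1 then a₁ else if t = 2 then a₂ else if t = 3 then a₃ else b

/-- The sequence `x^{2k} = a₁a₂a₃bbb⋯`, `x^{2k+1} = ba₁a₂a₃bbb⋯`. -/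
def badOrbit {A : Type*} (a₁ a₂ a₃ b : A) : ℕ → OTWFullShift A :=
  fun m => if m % 2 = 0 then wordEven a₁ a₂ a₃ b else wordOdd a₁ a₂ a₃ b

section Prefixes

variable {A : Type*}

theorem otwPre_ofFn (f : ℕ → A) (n : ℕ) :
    OTWPre (List.ofFn fun k : Fin n => f k) (Sum.inl f) := by
  simp [OTWPre]

theorem OTWPre.head?_eq {u : List A} {f : ℕ → A} (h : OTWPre u (Sum.inl f)) (hu : u ≠ []) :
    u.head? = some (f 0) := by
  rw [List.head?_eq_getElem?, List.getElem?_eq_getElem (List.length_pos_of_ne_nil hu)]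
  exact congrArg some (h ⟨0, List.length_pos_of_ne_nil hu⟩)

theorem otwPre_inl_iff_eq_nil {u : List A} {f : ℕ → A} (hu : u.head? ≠ some (f 0)) :
    OTWPre u (Sum.inl f) ↔ u = [] := by
  refine ⟨fun h => ?_, fun h => h ▸ otwPre_nil _⟩
  by_contra hne
  exact hu (h.head?_eq hne)

theorem exists_otwPre_inl_not_otwPre_inr (f : ℕ → A) (v : List A) :
    ∃ u, OTWPre u (Sum.inl f) ∧ ¬ OTWPre u (Sum.inr v) := by
  refine ⟨List.ofFn fun k : Fin (v.length + 1) => f k, otwPre_ofFn f _, fun h => ?_⟩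
  have hlen := List.IsPrefix.length_le h
  rw [List.length_ofFn] at hlen
  omega

end Prefixes

section Distance

variable {A : Type*} {Q : ℕ → List A}

theorem otwDist_self (Q : ℕ → List A) (x : OTWFullShift A) : otwDist Q x x = 0 :=
  if_pos rfl

theorem IsEnumeration.exists_xor_otwPre (hQ : IsEnumeration Q) {x y : OTWFullShift A}
    (hxy : x ≠ y) : ∃ j, 1 ≤ j ∧ Xor (OTWPre (Q j) x) (OTWPre (Q j) y) := by
  contrapose! hxy
  refine eq_of_forall_otwPre_iff fun u => ?_
  obtain ⟨k, rfl⟩ := hQ.surjective u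
  exact not_xor _ _ |>.1 (hxy (k + 1) k.succ_pos)

theorem otwDist_lt_pow_iff_s12 (hQ : IsEnumeration Q) {i : ℕ} {x y : OTWFullShift A} :
    otwDist Q x y < (1 / 2 : ℝ) ^ i ↔
      ∀ j, 1 ≤ j → j ≤ i → (OTWPre (Q j) x ↔ OTWPre (Q j) y) := by
  rcases eq_or_ne x y with rfl | hxy
  · simp [otwDist_self]
  rw [otwDist, if_neg hxy, pow_lt_pow_iff_right_of_lt_one₀ (by norm_num) (by norm_num)]
  constructor
  · intro hlt j hj hji
    have hnot := Nat.notMem_of_lt_sInf (hji.trans_lt hlt)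
    exact not_xor _ _ |>.1 fun hxor => hnot ⟨hj, hxor⟩
  · intro hagree
    -- Separation of points rules out the junk value `sInf ∅ = 0`.
    obtain ⟨hpos, hxor⟩ := Nat.sInf_mem (hQ.exists_xor_otwPre hxy)
    by_contra! hle
    exact not_xor _ _ |>.2 (hagree _ hpos hle) hxor

theorem otwDist_inl_lt_pow_of_head?_ne (hQ : IsEnumeration Q) {i : ℕ} {f g : ℕ → A}
    (hf : ∀ k, 1 ≤ k → k ≤ i → (Q k).head? ≠ some (f 0))
    (hg : ∀ k, 1 ≤ k → k ≤ i → (Q k).head? ≠ some (g 0)) :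
    otwDist Q (Sum.inl f) (Sum.inl g) < (1 / 2 : ℝ) ^ i :=
  (otwDist_lt_pow_iff_s12 hQ).2 fun k hk hki =>
    (otwPre_inl_iff_eq_nil (hf k hk hki)).trans (otwPre_inl_iff_eq_nil (hg k hk hki)).symm

end Distance

section BadOrbit

variable {A : Type*} (a₁ a₂ a₃ b : A)

theorem badOrbit_of_even {m : ℕ} (hm : Even m) :
    badOrbit a₁ a₂ a₃ b m = wordEven a₁ a₂ a₃ b :=
  if_pos (Nat.even_iff.1 hm)

theorem badOrbit_of_odd {m : ℕ} (hm : Odd m) :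
    badOrbit a₁ a₂ a₃ b m = wordOdd a₁ a₂ a₃ b :=
  if_neg (Nat.odd_iff.1 hm ▸ one_ne_zero)

theorem badOrbit_mem_otwDomain (m : ℕ) : badOrbit a₁ a₂ a₃ b m ∈ otwDomain A := by
  rcases m.even_or_odd with hm | hm
  · rw [badOrbit_of_even a₁ a₂ a₃ b hm]
    exact Sum.inl_ne_inr
  · rw [badOrbit_of_odd a₁ a₂ a₃ b hm]
    exact Sum.inl_ne_inr

theorem otwShift_wordOdd : otwShift (wordOdd a₁ a₂ a₃ b) = wordEven a₁ a₂ a₃ b := by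
  simp [otwShift, wordOdd, wordEven]

/-- The shift of `x^{2k+1}` is exactly `x^{2k+2}`, while the shift of `x^{2k}` starts with `a₂` and
`x^{2k+1}` starts with `b`, so among `q_1, …, q_i` only `∅` can be a prefix of either. -/
theorem badOrbit_is_pseudo_orbit_general {Q : ℕ → List A} (hQ : IsEnumeration Q) {i : ℕ}
    (ha₂ : ∀ k, 1 ≤ k → k ≤ i → (Q k).head? ≠ some a₂)
    (hb : ∀ k, 1 ≤ k → k ≤ i → (Q k).head? ≠ some b) (m : ℕ) :
    badOrbit a₁ a₂ a₃ b m ∈ otwDomain A ∧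
      otwDist Q (otwShift (badOrbit a₁ a₂ a₃ b m)) (badOrbit a₁ a₂ a₃ b (m + 1))
        < (1 / 2 : ℝ) ^ i := by
  refine ⟨badOrbit_mem_otwDomain a₁ a₂ a₃ b m, ?_⟩
  rcases m.even_or_odd with hm | hm
  · rw [badOrbit_of_even a₁ a₂ a₃ b hm, badOrbit_of_odd a₁ a₂ a₃ b hm.add_one]
    exact otwDist_inl_lt_pow_of_head?_ne hQ ha₂ hb
  · rw [badOrbit_of_odd a₁ a₂ a₃ b hm, badOrbit_of_even a₁ a₂ a₃ b hm.add_one,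
      otwShift_wordOdd, otwDist_self]
    positivity

end BadOrbit

/-- If no word among `q_1, …, q_i` starts with `a₂` and the letter `b` does not
occur in any word among `q_1, …, q_i`, then the sequence
`x^{2k} = a₁a₂a₃bbb⋯`, `x^{2k+1} = ba₁a₂a₃bbb⋯` is a `2^{-i}`-pseudo-orbit for
`(Σ_A, σ, d_Q)` (all its points lying in the domain `D = Σ_A ∖ {∅}`). -/
theorem badOrbit_is_pseudo_orbit {A : Type*} [Countable A] [Infinite A]
    (Q : ℕ → List A) (hQ : IsEnumeration Q) (i : ℕ) (hi : 1 ≤ i)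
    (a₁ a₂ a₃ b : A)
    (hd : a₁ ≠ a₂ ∧ a₁ ≠ a₃ ∧ a₁ ≠ b ∧ a₂ ≠ a₃ ∧ a₂ ≠ b ∧ a₃ ≠ b)
    (hstart : ∀ k : ℕ, 1 ≤ k → k ≤ i → (Q k).head? ≠ some a₂)
    (hocc : ∀ k : ℕ, 1 ≤ k → k ≤ i → b ∉ Q k) :
    ∀ m : ℕ, badOrbit a₁ a₂ a₃ b m ∈ otwDomain A ∧
      otwDist Q (otwShift (badOrbit a₁ a₂ a₃ b m)) (badOrbit a₁ a₂ a₃ b (m + 1))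
        < (1 / 2 : ℝ) ^ i :=
  badOrbit_is_pseudo_orbit_general a₁ a₂ a₃ b hQ hstart fun k hk hki hhead =>
    hocc k hk hki (List.mem_of_head? hhead)
end

section
/- Let A be a countably infinite set, Q an enumeration of Σ_A^fin, n ≥ 1, i > n an index, and a_1, a_2, a_3, b ∈ A pairwise distinct letters such that q_{i−n} = a_1 a_2 a_3. Define infinite words x^{2k} := a_1 a_2 a_3 b b b ⋯ and x^{2k+1} := b a_1 a_2 a_3 b b b ⋯ for all k ≥ 0. Then there is no x ∈ Σ_A such that d_Q(σ^m(x), x^m) < 2^{-(i−n)} for all m ≥ 0. -/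
/-!
Being `2^{-k}`-close to a word that begins with `q_k` forces a point to begin with `q_k`. A point
shadowing a sequence whose terms number `m` and `p + m` both begin with `q_k` therefore reads `q_k`
at position `m` and again at position `p + m`, so the word `q_k` overlaps itself with offset `p`:
it has period `p`. But if `a₁ ≠ a₃`, then `a₁a₂a₃` does not have period `2`.
-/

section OTWPre

variable {A : Type*} {u v : List A} {x : OTWFullShift A}

theorem OTWPre.tail (hux : OTWPre u x) : OTWPre u.tail (otwShift x) := by
  match x with
  | Sum.inl f =>
    intro j
    have hj : (j : ℕ) + 1 < u.length :=
      Nat.add_lt_of_lt_sub (j.isLt.trans_eq List.length_tail)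
    simpa using hux ⟨j + 1, hj⟩
  | Sum.inr w => simpa only [OTWPre, otwShift, List.drop_one] using List.IsPrefix.drop hux 1

theorem OTWPre.drop (hux : OTWPre u x) (p : ℕ) : OTWPre (u.drop p) (otwShift^[p] x) := by
  induction p with
  | zero => exact hux
  | succ p ih =>
    rw [Function.iterate_succ_apply', ← List.tail_drop]
    exact ih.tail

theorem OTWPre.isPrefix_of_length_le (hux : OTWPre u x) (hvx : OTWPre v x)
    (huv : u.length ≤ v.length) : u <+: v := by
  match x with
  | Sum.inl f =>
    rw [List.prefix_iff_getElem]
    exact ⟨huv, fun j hj => (hux ⟨j, hj⟩).trans (hvx ⟨j, hj.trans_le huv⟩).symm⟩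
  | Sum.inr w => exact List.prefix_of_prefix_length_le hux hvx huv

theorem OTWPre.hasPeriod {p : ℕ} (hux : OTWPre u x) (hup : OTWPre u (otwShift^[p] x)) :
    u.HasPeriod p := by
  have hoverlap : u.drop p <+: u :=
    (hux.drop p).isPrefix_of_length_le hup (List.drop_sublist p u).length_le
  simpa only [List.HasPeriod, List.take_append_drop] using
    (List.prefix_append_right_inj (u.take p)).mpr hoverlap

end OTWPre

section Shadowing

variable {A : Type*} {Q : ℕ → List A} {k : ℕ}

theorem otwPre_iff_of_otwDist_lt {x y : OTWFullShift A} (hk : 1 ≤ k)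
    (hxy : otwDist Q x y < (1 / 2 : ℝ) ^ k) : OTWPre (Q k) x ↔ OTWPre (Q k) y := by
  by_contra hdiff
  have hne : x ≠ y := by
    rintro rfl
    exact hdiff Iff.rfl
  have hfirst : sInf {j : ℕ | 1 ≤ j ∧ Xor (OTWPre (Q j) x) (OTWPre (Q j) y)} ≤ k :=
    Nat.sInf_le ⟨hk, (xor_iff_not_iff _ _).mpr hdiff⟩
  rw [otwDist, if_neg hne] at hxy
  exact hxy.not_ge (pow_le_pow_of_le_one (by norm_num) (by norm_num) hfirst)

theorem hasPeriod_of_shadowed {x : OTWFullShift A} {y : ℕ → OTWFullShift A} (hk : 1 ≤ k)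
    (hx : ∀ m, otwDist Q (otwShift^[m] x) (y m) < (1 / 2 : ℝ) ^ k) {m p : ℕ}
    (hm : OTWPre (Q k) (y m)) (hmp : OTWPre (Q k) (y (p + m))) : (Q k).HasPeriod p := by
  have hread : OTWPre (Q k) (otwShift^[m] x) := (otwPre_iff_of_otwDist_lt hk (hx m)).mpr hm
  have hread' : OTWPre (Q k) (otwShift^[p + m] x) :=
    (otwPre_iff_of_otwDist_lt hk (hx (p + m))).mpr hmp
  rw [Function.iterate_add_apply] at hread'
  exact hread.hasPeriod hread'

end Shadowing

theorem otwPre_wordEven {A : Type*} (a₁ a₂ a₃ b : A) :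
    OTWPre [a₁, a₂, a₃] (wordEven a₁ a₂ a₃ b) := by
  intro j
  fin_cases j <;> rfl

theorem otwPre_badOrbit_of_even {A : Type*} (a₁ a₂ a₃ b : A) {m : ℕ} (hm : Even m) :
    OTWPre [a₁, a₂, a₃] (badOrbit a₁ a₂ a₃ b m) := by
  rw [badOrbit, if_pos (Nat.even_iff.mp hm)]
  exact otwPre_wordEven a₁ a₂ a₃ b

theorem badOrbit_not_shadowed_general {A : Type*} {Q : ℕ → List A} {k : ℕ} (hk : 1 ≤ k)
    {a₁ a₂ a₃ : A} (b : A) (hne : a₁ ≠ a₃) (hq : Q k = [a₁, a₂, a₃]) :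
    ¬ ∃ x : OTWFullShift A, ∀ m : ℕ,
      otwDist Q (otwShift^[m] x) (badOrbit a₁ a₂ a₃ b m) < (1 / 2 : ℝ) ^ k := by
  rintro ⟨x, hx⟩
  have hpre {m : ℕ} (hm : Even m) : OTWPre (Q k) (badOrbit a₁ a₂ a₃ b m) :=
    hq ▸ otwPre_badOrbit_of_even a₁ a₂ a₃ b hm
  have hperiod : (Q k).HasPeriod 2 := hasPeriod_of_shadowed hk hx (hpre Even.zero) (hpre even_two)
  rw [hq] at hperiod
  have hoverlap : [a₃] <+: [a₁, a₂, a₃] := hperiod.drop_prefix 2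
  exact hne (List.cons_prefix_cons.mp hoverlap).1.symm

/-- If `q_{i-n} = a₁a₂a₃` with `a₁, a₂, a₃, b` pairwise distinct and `i > n ≥ 1`,
then no point of `Σ_A` shadows the sequence `x^{2k} = a₁a₂a₃bbb⋯`,
`x^{2k+1} = ba₁a₂a₃bbb⋯` within `2^{-(i-n)}`. -/
theorem badOrbit_not_shadowed {A : Type*} [Countable A] [Infinite A]
    (Q : ℕ → List A) (hQ : IsEnumeration Q) (n : ℕ) (hn : 1 ≤ n)
    (i : ℕ) (hi : n < i) (a₁ a₂ a₃ b : A)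
    (hd : a₁ ≠ a₂ ∧ a₁ ≠ a₃ ∧ a₁ ≠ b ∧ a₂ ≠ a₃ ∧ a₂ ≠ b ∧ a₃ ≠ b)
    (hq : Q (i - n) = [a₁, a₂, a₃]) :
    ¬ ∃ x : OTWFullShift A, ∀ m : ℕ,
      otwDist Q (otwShift^[m] x) (badOrbit a₁ a₂ a₃ b m) < (1 / 2 : ℝ) ^ (i - n) := by
  exact badOrbit_not_shadowed_general (Nat.sub_pos_of_lt hi) b hd.2.1 hq
end

section
/- Let A be a countably infinite set. There exists a prefix–shift-compatible enumeration of Σ_A^fin, i.e. a bijection P : {1,2,3,…} → Σ_A^fin with p_1 = ∅ such that: (1) whenever p_k = uv with u ∈ Σ_A^fin and v a nonempty finite word, then u = p_m for some m < k; and (2) whenever |p_k| ≥ 2, then σ(p_k) = p_m for some m < k. -/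
/-- `P` is a prefix–shift-compatible enumeration: `p_1 = ∅`, every proper prefix
of `p_k` appears earlier, and the shifted word `σ(p_k)` appears earlier whenever
`|p_k| ≥ 2`. -/
def PrefixShiftCompatible {A : Type*} (P : ℕ → List A) : Prop :=
  P 1 = [] ∧
  (∀ k : ℕ, 1 ≤ k → ∀ u v : List A, P k = u ++ v → v ≠ [] →
    ∃ m : ℕ, 1 ≤ m ∧ m < k ∧ P m = u) ∧
  (∀ k : ℕ, 1 ≤ k → 2 ≤ (P k).length →
    ∃ m : ℕ, 1 ≤ m ∧ m < k ∧ P m = (P k).tail)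

/-!
Code words by natural numbers so that the code strictly grows both when letters are appended and
when a letter is put in front, and list the words in increasing order of their codes. The code
`encode (a :: l) = Nat.pair (encode a) (encode l) + 1` works because the pairing function is
strictly monotone in its second argument and at least as large as it.
-/

section Coding

open Encodable

theorem encode_lt_encode_cons {A : Type*} [Encodable A] (a : A) (l : List A) :
    encode l < encode (a :: l) := by
  rw [encode_list_cons]
  exact Nat.lt_succ_of_le (Nat.right_le_pair _ _)

theorem encode_lt_encode_append {A : Type*} [Encodable A] (u : List A) {v : List A}
    (hv : v ≠ []) : encode u < encode (u ++ v) := by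
  induction u with
  | nil =>
    obtain ⟨b, l, rfl⟩ := List.exists_cons_of_ne_nil hv
    exact Nat.succ_pos _
  | cons a u ih =>
    rw [List.cons_append, encode_list_cons, encode_list_cons]
    exact Nat.succ_lt_succ (Nat.pair_lt_pair_right _ ih)

end Coding

theorem exists_equiv_nat_strictMono_comp {α : Type*} [Infinite α] {c : α → ℕ}
    (hc : Function.Injective c) : ∃ e : ℕ ≃ α, StrictMono (c ∘ e) := by
  classical
  have : Infinite (Set.range c) := (Set.infinite_range_of_injective hc).to_subtype
  let o : ℕ ≃o Set.range c := Nat.Subtype.orderIsoOfNat (Set.range c)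
  refine ⟨o.toEquiv.trans (Equiv.ofInjective c hc).symm, fun i j hij => ?_⟩
  simpa [Equiv.apply_ofInjective_symm] using o.strictMono hij

theorem exists_isEnumeration_strictMono {A : Type*} [Nonempty A] {c : List A → ℕ}
    (hc : Function.Injective c) :
    ∃ P : ℕ → List A, IsEnumeration P ∧ StrictMono fun k => c (P (k + 1)) := by
  obtain ⟨e, he⟩ := exists_equiv_nat_strictMono_comp hc
  exact ⟨fun k => e (k - 1), e.bijective, he⟩

namespace IsEnumeration

variable {A β : Type*} [LinearOrder β] {P : ℕ → List A} {c : List A → β}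

theorem exists_lt_of_code_lt (hP : IsEnumeration P) (hc : StrictMono fun k => c (P (k + 1)))
    {k : ℕ} (hk : 1 ≤ k) {w : List A} (hw : c w < c (P k)) :
    ∃ m : ℕ, 1 ≤ m ∧ m < k ∧ P m = w := by
  obtain ⟨j, rfl⟩ := Nat.exists_eq_add_of_le' hk
  obtain ⟨i, rfl⟩ := hP.surjective w
  exact ⟨i + 1, Nat.le_add_left 1 i, Nat.succ_lt_succ (hc.lt_iff_lt.mp hw), rfl⟩

theorem prefixShiftCompatible (hP : IsEnumeration P) (hc : StrictMono fun k => c (P (k + 1)))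
    (h_append : ∀ u v : List A, v ≠ [] → c u < c (u ++ v))
    (h_cons : ∀ (a : A) (l : List A), c l < c (a :: l)) : PrefixShiftCompatible P := by
  refine ⟨?_, fun k hk u v huv hv => ?_, fun k hk hlen => ?_⟩
  · by_contra hne
    obtain ⟨m, hm, hm', -⟩ := hP.exists_lt_of_code_lt hc le_rfl (h_append [] (P 1) hne)
    exact hm.not_gt hm'
  · exact hP.exists_lt_of_code_lt hc hk (huv ▸ h_append u v hv)
  · have hne : P k ≠ [] := List.ne_nil_of_length_pos (two_pos.trans_le hlen)
    have htail : c (P k).tail < c (P k) := by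
      simpa only [List.cons_head_tail] using h_cons ((P k).head hne) (P k).tail
    exact hP.exists_lt_of_code_lt hc hk htail

end IsEnumeration

theorem exists_prefix_shift_compatible_enumeration_general
    {A : Type*} [Countable A] [Nonempty A] :
    ∃ P : ℕ → List A, IsEnumeration P ∧ PrefixShiftCompatible P := by
  obtain ⟨_⟩ := nonempty_encodable A
  obtain ⟨P, hP, hmono⟩ :=
    exists_isEnumeration_strictMono (Encodable.encode_injective (α := List A))
  exact ⟨P, hP, hP.prefixShiftCompatible hmono
    (fun u _ hv => encode_lt_encode_append u hv) encode_lt_encode_cons⟩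

/-- There exists a prefix–shift-compatible enumeration of `Σ_A^fin`. -/
theorem exists_prefix_shift_compatible_enumeration
    {A : Type*} [Countable A] [Infinite A] :
    ∃ P : ℕ → List A, IsEnumeration P ∧ PrefixShiftCompatible P :=
  exists_prefix_shift_compatible_enumeration_general
end
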